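/- Let R be a commutative ring, d ≥ 1, and let x_0, x_1, x_2, B, M, A, L, C, y_0, …, y_d ∈ R. In R[u,v] set f = Σ_{i=0}^{d} C(d,i)·y_i·u^{d−i}·v^i, g = B·u + x_2·v, and h = x_0·u + M·v, where C(d,i) is the binomial coefficient. Then: (1) if x_1·y_i = A·B^{d−i}·x_2^i + L·x_0^{d−i}·M^i for all 0 ≤ i ≤ d, then x_1·f = A·g^d + L·h^d; (2) if M·y_i − x_0·y_{i+1} = A·C·B^{d−1−i}·x_2^i for all 0 ≤ i ≤ d−1, then M·(∂f/∂u) − x_0·(∂f/∂v) = d·A·C·g^{d−1}; (3) if B·y_{i+1} − x_2·y_i = C·L·x_0^{d−1−i}·M^i for all 0 ≤ i ≤ d−1, then −x_2·(∂f/∂u) + B·(∂f/∂v) = d·L·C·h^{d−1}. -/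

import Mathlib

/-!
The invariant form of the equations rests on three facts about `y ↦ f d y`: it is linear in the
coefficient sequence; it sends a geometric sequence `a p^{d-i} q^i` to `a (p u + q v)^d`, by the
binomial theorem (`f_geometric`); and both partial derivatives of `f (n+1) y` are `n + 1` times
a form of degree `n`, with coefficient sequence `y` for `∂/∂u` and the shifted sequence
`i ↦ y (i + 1)` for `∂/∂v` (`pderiv_zero_f`, `pderiv_one_f`). Each of the three claims then says
that a combination of `y` and its shift is a geometric sequence.
-/

/-!
The GL(2)-invariant forms of the Pfaffian equations of the polar 7-fold
`W(d)`: the coefficientwise equations assemble into polynomial identities for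
the binary form `f` and the linear forms `g = Bu + x₂v`, `h = x₀u + Mv`.
-/

open MvPolynomial Finset

noncomputable section

namespace Wd

variable {R : Type*} [CommRing R]

/-- The binary form `f = Σ_{i=0}^{d} C(d,i) y_i u^{d-i} v^i` in `R[u,v]`
(`u = X 0`, `v = X 1`). -/
def f (d : ℕ) (y : ℕ → R) : MvPolynomial (Fin 2) R :=
  ∑ i ∈ range (d + 1),
    (d.choose i : MvPolynomial (Fin 2) R) * C (y i) * X 0 ^ (d - i) * X 1 ^ i

/-- The linear form `g = B u + x₂ v`. -/
def g (B x2 : R) : MvPolynomial (Fin 2) R := C B * X 0 + C x2 * X 1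

/-- The linear form `h = x₀ u + M v`. -/
def h (x0 M : R) : MvPolynomial (Fin 2) R := C x0 * X 0 + C M * X 1

end Wd

namespace Wd

variable {R : Type*} [CommRing R]

/-- Only the coefficients `y 0, …, y d` enter the form. -/
lemma f_congr {d : ℕ} {y z : ℕ → R} (hyz : ∀ i, i ≤ d → y i = z i) : f d y = f d z := by
  refine sum_congr rfl fun i hi => ?_
  rw [hyz i (Nat.lt_succ_iff.mp (mem_range.mp hi))]

lemma f_add (d : ℕ) (y z : ℕ → R) : f d (fun i => y i + z i) = f d y + f d z := by
  simp only [f, ← sum_add_distrib, C_add]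
  exact sum_congr rfl fun i _ => by ring

lemma f_smul (d : ℕ) (a : R) (y : ℕ → R) : f d (fun i => a * y i) = C a * f d y := by
  simp only [f, mul_sum, C_mul]
  exact sum_congr rfl fun i _ => by ring

lemma f_sub (d : ℕ) (y z : ℕ → R) : f d (fun i => y i - z i) = f d y - f d z := by
  simp only [f, ← sum_sub_distrib, C_sub]
  exact sum_congr rfl fun i _ => by ring

lemma f_geometric (d : ℕ) (a p q : R) :
    f d (fun i => a * p ^ (d - i) * q ^ i) = C a * (C p * X 0 + C q * X 1) ^ d := by
  rw [add_comm (C p * X 0), add_pow, f, mul_sum]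
  refine sum_congr rfl fun i _ => ?_
  simp only [C_mul, C_pow, mul_pow]
  ring

lemma pderiv_zero_f (n : ℕ) (y : ℕ → R) :
    pderiv 0 (f (n + 1) y) = ((n + 1 : ℕ) : MvPolynomial (Fin 2) R) * f n y := by
  -- The top term `i = n + 1` contains no `u`, so its derivative vanishes.
  rw [f, sum_range_succ, map_add, map_sum, f, mul_sum]
  have htop : pderiv (0 : Fin 2) ((((n + 1).choose (n + 1) : ℕ) : MvPolynomial (Fin 2) R) *
      C (y (n + 1)) * X 0 ^ (n + 1 - (n + 1)) * X 1 ^ (n + 1)) = 0 := by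
    simp [pderiv_X]
  rw [htop, add_zero]
  refine sum_congr rfl fun i hi => ?_
  have hi' : i ≤ n := Nat.lt_succ_iff.mp (mem_range.mp hi)
  have hchoose : (((n + 1).choose i : ℕ) : MvPolynomial (Fin 2) R) * ((n - i + 1 : ℕ) : _)
      = ((n + 1 : ℕ) : _) * (n.choose i : _) := by
    have := Nat.choose_mul_succ_eq n i
    rw [Nat.succ_sub hi'] at this
    rw [← Nat.cast_mul, ← Nat.cast_mul, ← this, mul_comm]
  rw [Nat.succ_sub hi']
  simp only [pderiv_mul, pderiv_pow, pderiv_X, pderiv_C, Derivation.map_natCast,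
    Nat.succ_eq_add_one,
    Nat.add_sub_cancel, Pi.single_eq_same, Pi.single_eq_of_ne (one_ne_zero : (1 : Fin 2) ≠ 0)]
  linear_combination C (y i) * X 0 ^ (n - i) * X 1 ^ i * hchoose

lemma pderiv_one_f (n : ℕ) (y : ℕ → R) :
    pderiv 1 (f (n + 1) y) =
      ((n + 1 : ℕ) : MvPolynomial (Fin 2) R) * f n (fun i => y (i + 1)) := by
  -- The bottom term `i = 0` contains no `v`, so its derivative vanishes.
  rw [f, sum_range_succ', map_add, map_sum, f, mul_sum]
  have hbot : pderiv (1 : Fin 2) ((((n + 1).choose 0 : ℕ) : MvPolynomial (Fin 2) R) *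
      C (y 0) * X 0 ^ (n + 1 - 0) * X 1 ^ 0) = 0 := by
    simp [pderiv_X]
  rw [hbot, add_zero]
  refine sum_congr rfl fun i _ => ?_
  have hchoose : (((n + 1).choose (i + 1) : ℕ) : MvPolynomial (Fin 2) R) * ((i + 1 : ℕ) : _)
      = ((n + 1 : ℕ) : _) * (n.choose i : _) := by
    rw [← Nat.cast_mul, ← Nat.cast_mul, ← Nat.add_one_mul_choose_eq]
  rw [Nat.add_sub_add_right]
  simp only [pderiv_mul, pderiv_pow, pderiv_X, pderiv_C, Derivation.map_natCast,
    Nat.add_sub_cancel, Pi.single_eq_same, Pi.single_eq_of_ne (zero_ne_one : (0 : Fin 2) ≠ 1)]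
  linear_combination C (y (i + 1)) * X 0 ^ (n - i) * X 1 ^ i * hchoose

end Wd

open Wd in
/-- The equations of `W(d)` in invariant form. Let `R` be a commutative ring,
`d ≥ 1`, and `x₀, x₁, x₂, B, M, A, L, Cʹ, y₀, …, y_d ∈ R`. Then:
(1) if `x₁ y_i = A B^{d-i} x₂^i + L x₀^{d-i} M^i` for all `i ≤ d`, then
`x₁ f = A g^d + L h^d`;
(2) if `M y_i - x₀ y_{i+1} = A Cʹ B^{d-1-i} x₂^i` for all `i ≤ d-1`, then
`M f_u - x₀ f_v = d A Cʹ g^{d-1}`;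
(3) if `B y_{i+1} - x₂ y_i = Cʹ L x₀^{d-1-i} M^i` for all `i ≤ d-1`, then
`-x₂ f_u + B f_v = d L Cʹ h^{d-1}`. -/
theorem Wd_invariant_equations {R : Type*} [CommRing R] (d : ℕ) (hd : 1 ≤ d)
    (x0 x1 x2 B M A L C' : R) (y : ℕ → R) :
    ((∀ i : ℕ, i ≤ d → x1 * y i = A * B ^ (d - i) * x2 ^ i + L * x0 ^ (d - i) * M ^ i) →
      C x1 * f d y = C A * (g B x2) ^ d + C L * (h x0 M) ^ d) ∧
    ((∀ i : ℕ, i ≤ d - 1 → M * y i - x0 * y (i + 1) = A * C' * B ^ (d - 1 - i) * x2 ^ i) →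
      C M * pderiv 0 (f d y) - C x0 * pderiv 1 (f d y)
        = (d : MvPolynomial (Fin 2) R) * C A * C C' * (g B x2) ^ (d - 1)) ∧
    ((∀ i : ℕ, i ≤ d - 1 → B * y (i + 1) - x2 * y i = C' * L * x0 ^ (d - 1 - i) * M ^ i) →
      -(C x2) * pderiv 0 (f d y) + C B * pderiv 1 (f d y)
        = (d : MvPolynomial (Fin 2) R) * C L * C C' * (h x0 M) ^ (d - 1)) := by
  obtain ⟨n, rfl⟩ : ∃ n, d = n + 1 := ⟨d - 1, by omega⟩
  simp only [Nat.add_sub_cancel, pderiv_zero_f, pderiv_one_f, g, h]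
  refine ⟨fun H => ?_, fun H => ?_, fun H => ?_⟩
  · rw [← f_smul, f_congr H, f_add, f_geometric, f_geometric]
  · have key := f_congr H
    rw [f_sub, f_smul, f_smul, f_geometric, C_mul] at key
    linear_combination ((n + 1 : ℕ) : MvPolynomial (Fin 2) R) * key
  · have key := f_congr H
    rw [f_sub, f_smul, f_smul, f_geometric, C_mul] at key
    linear_combination ((n + 1 : ℕ) : MvPolynomial (Fin 2) R) * key
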